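/- arXiv:2504.04821 — 8 statements merged into one kernel-verified Lean document; each statement's English description precedes it below -/
import Mathlib

section
/- (Negative pruning.) Let G be a simple graph on a finite vertex set V, let S ⊆ V be such that the subgraph of G induced on S has chromatic number at least k, and let u, v be distinct nonadjacent vertices with S ⊆ N(u) ∪ N(v). Then the graph G / (u,v) obtained by identifying u and v has chromatic number at least k + 1; in particular G / (u,v) is not k-colorable. -/
/-!
A `k`-coloring of `G / (u,v)` restricts to `S`, since neither `u` nor `v` lies in
`S ⊆ N(u) ∪ N(v)` when `u` and `v` are nonadjacent. Every vertex of `S` is adjacent to the merged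
vertex, so the restriction avoids the color of that vertex and is a `(k - 1)`-coloring of the
subgraph induced on `S`, whose chromatic number would then be less than `k`.
-/

open SimpleGraph

/-- The graph `G / (u,v)` obtained by identifying the nonadjacent vertices `u` and `v`:
the vertex `u` is removed and the vertex `v` (representing the merged vertex) becomes
adjacent to `N(u) ∪ N(v)`. -/
def SimpleGraph.contractPair {V : Type*} (G : SimpleGraph V) (u v : V) :
    SimpleGraph {x : V // x ≠ u} :=
  SimpleGraph.fromRel (fun a b =>
    G.Adj a.1 b.1 ∨ (a.1 = v ∧ G.Adj u b.1) ∨ (b.1 = v ∧ G.Adj a.1 u))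

/-- Negative pruning: if the subgraph induced on `S` has chromatic number at least `k`
and `u`, `v` are distinct nonadjacent vertices with `S ⊆ N(u) ∪ N(v)`, then `G / (u,v)`
has chromatic number at least `k + 1`; in particular it is not `k`-colorable. -/
theorem negative_pruning {V : Type*} [Fintype V] (G : SimpleGraph V)
    (S : Set V) (k : ℕ) (hS : (k : ℕ∞) ≤ (G.induce S).chromaticNumber)
    (u v : V) (huv : u ≠ v) (hnadj : ¬ G.Adj u v)
    (hcover : S ⊆ G.neighborSet u ∪ G.neighborSet v) :
    ((k : ℕ∞) + 1) ≤ (G.contractPair u v).chromaticNumber ∧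
      ¬ (G.contractPair u v).Colorable k := by
  have hnot : ¬ (G.contractPair u v).Colorable k := by
    rintro ⟨C⟩
    let c : Fin k := C ⟨v, huv.symm⟩
    have hu : ∀ x ∈ S, x ≠ u := by
      rintro x hx rfl
      rcases hcover hx with h | h
      · exact G.loopless.irrefl _ h
      · exact hnadj (SimpleGraph.Adj.symm h)
    have hv : ∀ x ∈ S, x ≠ v := by
      rintro x hx rfl
      rcases hcover hx with h | h
      · exact hnadj h
      · exact G.loopless.irrefl _ h
    have hc : ∀ x (hx : x ∈ S), C ⟨x, hu x hx⟩ ≠ c := by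
      intro x hx
      refine (C.valid (v := ⟨v, huv.symm⟩) (w := ⟨x, hu x hx⟩) ?_).symm
      rw [SimpleGraph.contractPair, SimpleGraph.fromRel_adj]
      refine ⟨fun h => hv x hx (congrArg Subtype.val h).symm, Or.inl ?_⟩
      rcases hcover hx with h | h
      · exact Or.inr (Or.inl ⟨rfl, h⟩)
      · exact Or.inl h
    let D : (G.induce S).Coloring {i : Fin k // i ≠ c} :=
      SimpleGraph.Coloring.mk (fun x => ⟨C ⟨x.1, hu x.1 x.2⟩, hc x.1 x.2⟩) (by
        intro x y hxy h
        refine C.valid (v := ⟨x.1, hu x.1 x.2⟩) (w := ⟨y.1, hu y.1 y.2⟩) ?_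
          (congrArg Subtype.val h)
        rw [SimpleGraph.contractPair, SimpleGraph.fromRel_adj]
        exact ⟨fun h => hxy.ne (Subtype.ext (Subtype.mk.inj h)),
          Or.inl (Or.inl hxy)⟩)
    have hD : (G.induce S).Colorable (k - 1) := by
      simpa [Fintype.card_subtype_compl] using D.colorable
    have hle : k ≤ k - 1 := by
      exact_mod_cast hS.trans hD.chromaticNumber_le
    -- `c : Fin k` forces `0 < k`, so the truncated `k - 1` is smaller than `k`.
    have := c.pos
    omega
  refine ⟨Order.add_one_le_of_lt (lt_of_not_ge fun h => hnot ?_), hnot⟩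
  exact SimpleGraph.chromaticNumber_le_iff_colorable.mp h
end

section
/- (Positive-pruning propagation.) Let G be a simple graph on a finite vertex set V, let S ⊆ V be such that the subgraph of G induced on S has chromatic number at least k, and let v ∈ V \ S be a vertex such that S \ N(v) = {u} for some vertex u. Then every proper k-coloring f of G satisfies f(u) = f(v). -/
/-!
If `f u ≠ f v` for some proper `k`-coloring `f`, then no vertex of `S` has the color `f v`: the
vertices of `S` other than `u` are neighbors of `v`. Hence `f` restricts to a proper coloring of
the subgraph induced on `S` with the `k - 1` colors different from `f v`, contradicting the lower
bound on its chromatic number.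
-/

open SimpleGraph

/-- Positive-pruning propagation: if the subgraph induced on `S` has chromatic number
at least `k`, `v ∉ S`, and `S \ N(v) = {u}`, then every proper `k`-coloring `f` of `G`
satisfies `f u = f v`. -/
theorem positive_pruning_propagation {V : Type*} [Fintype V] (G : SimpleGraph V)
    (S : Set V) (k : ℕ) (hS : (k : ℕ∞) ≤ (G.induce S).chromaticNumber)
    (u v : V) (hv : v ∉ S) (hu : S \ G.neighborSet v = {u}) :
    ∀ f : G.Coloring (Fin k), f u = f v := by
  intro f
  by_contra hne
  -- The color of `v` is missing on `S`: every vertex of `S` other than `u` is adjacent to `v`.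
  have avoid : ∀ x : S, f x ≠ f v := by
    rintro ⟨x, hx⟩ hfx
    by_cases hadj : G.Adj v x
    · exact f.valid hadj hfx.symm
    · have hxu : x ∈ S \ G.neighborSet v := ⟨hx, hadj⟩
      rw [hu, Set.mem_singleton_iff] at hxu
      exact hne (hxu ▸ hfx)
  let g : (G.induce S).Coloring {c : Fin k // c ≠ f v} :=
    Coloring.mk (fun x => ⟨f x, avoid x⟩) fun {a b} hab h =>
      f.valid (show G.Adj a b from hab) (congrArg Subtype.val h)
  have hle : (k : ℕ∞) ≤ (Fintype.card {c : Fin k // c ≠ f v} : ℕ) :=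
    hS.trans g.colorable.chromaticNumber_le
  have hlt : Fintype.card {c : Fin k // c ≠ f v} < Fintype.card (Fin k) :=
    Fintype.card_subtype_lt (x := f v) (by simp)
  rw [Fintype.card_fin] at hlt
  exact absurd (Nat.cast_le.mp hle) (not_le.mpr hlt)
end

section
/- (Negative-pruning propagation.) Let G be a simple graph on a finite vertex set V, let S ⊆ V be such that the subgraph of G induced on S has chromatic number at least k, and let u, v be two vertices with S ⊆ N(u) ∪ N(v). Then every proper k-coloring f of G satisfies f(u) ≠ f(v). -/
open SimpleGraph

/-- Negative-pruning propagation: if the subgraph induced on `S` has chromatic number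
at least `k` and `u`, `v` are vertices with `S ⊆ N(u) ∪ N(v)`, then every proper
`k`-coloring `f` of `G` satisfies `f u ≠ f v`. -/
theorem negative_pruning_propagation {V : Type*} [Fintype V] (G : SimpleGraph V)
    (S : Set V) (k : ℕ) (hS : (k : ℕ∞) ≤ (G.induce S).chromaticNumber)
    (u v : V) (hcover : S ⊆ G.neighborSet u ∪ G.neighborSet v) :
    ∀ f : G.Coloring (Fin k), f u ≠ f v := by
  intro f huv
  -- If `f u = f v`, the covering hypothesis makes `f` avoid the color `f u` on all of `S`,
  -- so `f` restricts to a coloring of the induced subgraph with `k - 1` colors.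
  have havoid : ∀ s : S, f s ≠ f u := by
    intro s hs
    rcases hcover s.2 with h | h
    · exact f.valid h hs.symm
    · exact f.valid h (huv.symm.trans hs.symm)
  let g : (G.induce S).Coloring {c : Fin k // c ≠ f u} :=
    Coloring.mk (fun s => ⟨f s, havoid s⟩) fun {a b} hab h =>
      f.valid (show G.Adj a b from hab) (congrArg Subtype.val h)
  have hle := hS.trans g.colorable.chromaticNumber_le
  have hcard : Fintype.card {c : Fin k // c ≠ f u} = k - 1 := by simp
  rw [hcard, Nat.cast_le] at hle
  -- The color `f u : Fin k` witnesses `0 < k`, so the subtraction does not truncate.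
  have hpos := (f u).pos
  omega
end

section
/- (Correctness of the full Zykov encoding.) Let G be a simple graph on the vertex set {1,…,n} and let k ≥ 1. Then G is k-colorable if and only if there exists a symmetric relation e on {1,…,n} such that: (i) e(u,v) is false for every edge {u,v} of G; (ii) for all vertices u, v, w, if e(u,v) and e(v,w) then e(u,w); and (iii) the number of vertices v such that e(u,v) is false for every u < v is at most k. -/
/-!
A coloring `f` yields the relation of having the same color; `f` is injective on the
vertices with no equivalent predecessor (the *representatives*), so there are at most `k` of them.
Conversely, by strong induction along the vertex order, every vertex equals or is related to some
representative (`exists_representative`). Choosing one for each vertex colors `G` by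
representatives: two vertices sharing one are equal or related, hence not adjacent.
-/

open SimpleGraph

/-- Only transitivity is needed: descend from `v` to related smaller vertices until stuck.
The alternative `r = v` is required because `e` need not be reflexive. -/
lemma exists_representative {n : ℕ} (e : Fin n → Fin n → Bool)
    (htrans : ∀ u v w : Fin n, e u v = true → e v w = true → e u w = true) (v : Fin n) :
    ∃ r : Fin n, (∀ u : Fin n, u < r → e u r = false) ∧ (r = v ∨ e r v = true) := by
  induction v using WellFoundedLT.induction with
  | ind v ih =>
    by_cases hv : ∀ u : Fin n, u < v → e u v = false
    · exact ⟨v, hv, Or.inl rfl⟩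
    · push Not at hv
      obtain ⟨u, huv, heuv⟩ := hv
      have heuv : e u v = true := by simpa using heuv
      obtain ⟨r, hr, rfl | hru⟩ := ih u huv
      · exact ⟨r, hr, Or.inr heuv⟩
      · exact ⟨r, hr, Or.inr (htrans r u v hru heuv)⟩

/-- Correctness of the full Zykov encoding: `G` on vertex set `{1,…,n}` is `k`-colorable
iff there is a symmetric Boolean relation `e` that is false on edges, transitive, and
such that the number of vertices `v` with `e u v` false for all `u < v` is at most `k`. -/
theorem zykov_encoding_correct {n k : ℕ} (G : SimpleGraph (Fin n)) (hk : 1 ≤ k) :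
    G.Colorable k ↔
      ∃ e : Fin n → Fin n → Bool,
        (∀ u v : Fin n, e u v = e v u) ∧
        (∀ u v : Fin n, G.Adj u v → e u v = false) ∧
        (∀ u v w : Fin n, e u v = true → e v w = true → e u w = true) ∧
        (Finset.univ.filter
          (fun v : Fin n => ∀ u : Fin n, u < v → e u v = false)).card ≤ k := by
  constructor
  · rintro ⟨f⟩
    refine ⟨fun u v => decide (f u = f v), fun u v => by simp [eq_comm],
      fun u v h => by simpa using f.valid h, fun u v w => ?_, ?_⟩
    · simp only [decide_eq_true_eq]
      exact Eq.trans
    · refine le_of_le_of_eq (b := (Finset.univ : Finset (Fin k)).card) ?_ (Finset.card_fin k)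
      refine Finset.card_le_card_of_injOn f (fun _ _ => Finset.mem_coe.2 (Finset.mem_univ _)) ?_
      intro u hu v hv huv
      simp only [Finset.coe_filter, Finset.mem_univ, true_and, Set.mem_ofPred_eq,
        decide_eq_false_iff_not] at hu hv
      rcases lt_trichotomy u v with h | h | h
      · exact absurd huv (hv u h)
      · exact h
      · exact absurd huv.symm (hu v h)
  · rintro ⟨e, hsymm, hadj, htrans, hcard⟩
    choose r hr hrep using exists_representative e htrans
    let S := Finset.univ.filter (fun v : Fin n => ∀ u : Fin n, u < v → e u v = false)
    let c : G.Coloring S := Coloring.mk (fun v => ⟨r v, by simpa [S] using hr v⟩) (by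
      intro u v huv heq
      have heq : r u = r v := congrArg Subtype.val heq
      have hne : e u v = false := hadj u v huv
      have huv' := huv.ne
      have key : u = v ∨ e u v = true := by
        rcases hrep u with hu | hu <;> rcases hrep v with hv | hv
        · exact Or.inl (hu.symm.trans (heq.trans hv))
        · exact Or.inr (by rwa [← heq, hu] at hv)
        · exact Or.inr (by rwa [heq, hv, hsymm] at hu)
        · rw [hsymm] at hu
          rw [← heq] at hv
          exact Or.inr (htrans _ _ _ hu hv)
      rcases key with h | h
      · exact huv' h
      · simp [hne] at h)
    exact c.colorable.mono ((Fintype.card_coe S).trans_le hcard)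
end

section
/- (Correctness of the symmetry-breaking constraints.) Let G be a simple graph on the vertex set {1,…,n} and let k ≥ 1. Then G is k-colorable if and only if there exists a proper k-coloring f : {1,…,n} → {1,…,k} of G such that f(v) ≤ v for every vertex v. -/
/-!
Relabel the colors of a given proper coloring in order of first appearance: the new color of `v` is
the number of colors that occur strictly before the first vertex `m v` having the color of `v`.
At most `m v ≤ v` colors occur there, and the color of `v` is not among them, so the new color is at
most `v` and less than `k`. If `u` and `v` have distinct colors with `m u < m v`, then the
set of colors before `m u` is strictly contained in the set before `m v`, the color of `u`
belonging only to the latter; hence the relabeling is still proper.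
-/

open SimpleGraph

/-- Correctness of the symmetry-breaking constraints: `G` on vertex set `{1,…,n}` is
`k`-colorable iff there is a proper `k`-coloring `C` with `C v ≤ v` for every vertex `v`
(vertices and colors both numbered starting from the same index). -/
theorem symmetry_breaking_correct {n k : ℕ} (G : SimpleGraph (Fin n)) (hk : 1 ≤ k) :
    G.Colorable k ↔
      ∃ C : G.Coloring (Fin k), ∀ v : Fin n, (C v : ℕ) ≤ (v : ℕ) := by
  constructor
  · rintro ⟨C⟩
    have first_occurrence : ∀ v : Fin n, ∃ m : Fin n, C m = C v ∧ ∀ w, C w = C v → m ≤ w := by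
      intro v
      obtain ⟨m, hm, hmin⟩ := Set.exists_min_image {w : Fin n | C w = C v} id
        (Set.toFinite _) ⟨v, rfl⟩
      exact ⟨m, hm, fun w hw => hmin w hw⟩
    choose m hm hmin using first_occurrence
    let S : Fin n → Finset (Fin k) := fun v => (Finset.Iio (m v)).image C
    have not_mem : ∀ v, C v ∉ S v := by
      intro v hv
      obtain ⟨w, hw, hwv⟩ := Finset.mem_image.1 hv
      exact absurd (hmin v w hwv) (not_le.2 (Finset.mem_Iio.1 hw))
    have card_lt : ∀ v, (S v).card < k := by
      intro v
      simpa using Finset.card_lt_univ_of_notMem (not_mem v)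
    have card_lt_card : ∀ u v, m u < m v → (S u).card < (S v).card := by
      intro u v huv
      apply Finset.card_lt_card
      refine (Finset.ssubset_iff_of_subset
        (Finset.image_subset_image (Finset.Iio_subset_Iio huv.le))).2 ⟨C u, ?_, not_mem u⟩
      exact Finset.mem_image.2 ⟨m u, Finset.mem_Iio.2 huv, hm u⟩
    refine ⟨Coloring.mk (fun v => ⟨(S v).card, card_lt v⟩) ?_, fun v => ?_⟩
    · intro u v huv heq
      have hcard : (S u).card = (S v).card := congrArg Fin.val heq
      rcases lt_trichotomy (m u) (m v) with h | h | h
      · exact (card_lt_card u v h).ne hcard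
      · exact C.valid huv (by rw [← hm u, ← hm v, h])
      · exact (card_lt_card v u h).ne' hcard
    · calc (S v).card ≤ (Finset.Iio (m v)).card := Finset.card_image_le
        _ = (m v : ℕ) := Fin.card_Iio _
        _ ≤ (v : ℕ) := hmin v v rfl
  · rintro ⟨C, -⟩
    exact ⟨C⟩
end

section
/- (Mycielski's theorem on the chromatic number.) Let G be a simple graph on a finite vertex set. Then the Mycielskian μ(G) satisfies χ(μ(G)) = χ(G) + 1. -/
/-!
For every `n`, `μ(G)` is `(n + 1)`-colorable if and only if `G` is `n`-colorable, and `μ(G)`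
is never `0`-colorable as it contains `w`; this determines the chromatic number.

An `n`-coloring of `G` extends to `μ(G)` by giving `u_x` and `v_x` the color of `x`, and `w` a new
color. Conversely, in a coloring of `μ(G)` let `a` be the color of `w`. No `v_x` has color `a`, so
recoloring each `u_x` of color `a` with the color of `v_x` avoids `a`; the result is proper on the
first copy of `G`, since no two adjacent vertices are both recolored and `v_x` is adjacent to all
the `G`-neighbors of `x` in the first copy.
-/

open SimpleGraph

/-- The Mycielskian of a simple graph `G` on vertex set `V`: its vertex set is
`V ⊕ V ⊕ Unit` (a first copy of `V`, a second copy of `V`, and an extra vertex `w`),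
with edges `u_x u_y` and `u_x v_y` for every edge `{x,y}` of `G`,
and `v_x w` for every `x ∈ V`. -/
def SimpleGraph.mycielskian {V : Type*} (G : SimpleGraph V) :
    SimpleGraph (V ⊕ V ⊕ Unit) :=
  SimpleGraph.fromRel (fun a b =>
    match a, b with
    | Sum.inl x, Sum.inl y => G.Adj x y
    | Sum.inl x, Sum.inr (Sum.inl y) => G.Adj x y
    | Sum.inr (Sum.inl _), Sum.inr (Sum.inr _) => True
    | _, _ => False)

theorem mycielskian_colorable_succ {V : Type*} {G : SimpleGraph V} {n : ℕ}
    (h : G.Colorable n) : G.mycielskian.Colorable (n + 1) := by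
  obtain ⟨c⟩ := h
  let C : G.mycielskian.Coloring (Option (Fin n)) := Coloring.mk
    (fun a => match a with
      | Sum.inl x => some (c x)
      | Sum.inr (Sum.inl x) => some (c x)
      | Sum.inr (Sum.inr _) => none) (by
    rintro (x | x | x) (y | y | y) hxy <;>
      simp only [mycielskian, fromRel_adj] at hxy <;> simp at hxy ⊢
    · exact c.valid (hxy.2.elim id fun h => h.symm)
    · exact c.valid hxy
    · exact c.valid hxy.symm)
  simpa using C.colorable

theorem colorable_of_mycielskian {V : Type*} {G : SimpleGraph V} {n : ℕ}
    (h : G.mycielskian.Colorable (n + 1)) : G.Colorable n := by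
  classical
  obtain ⟨c⟩ := h
  have huu : ∀ {x y}, G.Adj x y → c (Sum.inl x) ≠ c (Sum.inl y) := fun {x y} hxy =>
    c.valid (by simp [mycielskian, hxy, hxy.ne])
  have huv : ∀ {x y}, G.Adj x y → c (Sum.inl x) ≠ c (Sum.inr (Sum.inl y)) := fun {x y} hxy =>
    c.valid (by simp [mycielskian, hxy])
  have hvw : ∀ x, c (Sum.inr (Sum.inl x)) ≠ c (Sum.inr (Sum.inr ())) := fun x =>
    c.valid (by simp [mycielskian])
  let C : G.Coloring {b : Fin (n + 1) // b ≠ c (Sum.inr (Sum.inr ()))} := Coloring.mk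
    (fun x => if hx : c (Sum.inl x) = c (Sum.inr (Sum.inr ()))
      then ⟨c (Sum.inr (Sum.inl x)), hvw x⟩ else ⟨c (Sum.inl x), hx⟩) (by
    intro x y hxy
    have h1 := huu hxy
    have h2 := huv hxy
    have h3 := huv hxy.symm
    split_ifs with hx hy hy
    · exact absurd (hx.trans hy.symm) h1
    · exact fun h => h3 (congrArg Subtype.val h).symm
    · exact fun h => h2 (congrArg Subtype.val h)
    · exact fun h => h1 (congrArg Subtype.val h))
  simpa [Fintype.card_subtype_compl] using C.colorable

/-- Mycielski's theorem: the Mycielskian increases the chromatic number by exactly one. -/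
theorem mycielskian_chromaticNumber {V : Type*} [Fintype V] (G : SimpleGraph V) :
    G.mycielskian.chromaticNumber = G.chromaticNumber + 1 := by
  obtain ⟨n, hn⟩ := ENat.ne_top_iff_exists.mp
    (chromaticNumber_ne_top_iff_exists.mpr ⟨_, G.colorable_of_fintype⟩)
  rw [← hn]
  apply le_antisymm
  · have h : G.Colorable n := chromaticNumber_le_iff_colorable.mp hn.ge
    exact_mod_cast (mycielskian_colorable_succ h).chromaticNumber_le
  · have key : ((n + 1 : ℕ) : ℕ∞) ≤ G.mycielskian.chromaticNumber := by
      rw [le_chromaticNumber_iff_colorable]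
      rintro (_ | m) hm
      · exact ((colorable_zero_iff.mp hm).false (Sum.inr (Sum.inr ()))).elim
      · have h := (colorable_of_mycielskian hm).chromaticNumber_le
        rw [← hn] at h
        exact Nat.succ_le_succ (by exact_mod_cast h)
    exact_mod_cast key
end

section
/- (The Mycielskian preserves the clique number.) Let G be a simple graph on a finite vertex set with at least one edge. Then the Mycielskian μ(G) has the same clique number as G, i.e., ω(μ(G)) = ω(G). -/
/-!
The first copy of `G` sits inside the Mycielskian, so `ω(G) ≤ ω(μ(G))`. Conversely, take a clique
`s` of `μ(G)`. If `w ∉ s`, forgetting which copy a vertex lies in maps `s` to `V` and preserves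
adjacency, so it sends `s` injectively to a clique of `G`. If `w ∈ s`, all other members of `s` are
in the second copy of `V`, which is independent, so `s` has at most two elements; an edge of `G`
gives `2 ≤ ω(G)`.
-/

open SimpleGraph

namespace SimpleGraph

variable {V : Type*} {G : SimpleGraph V}

lemma mycielskian_adj_inl_inl {x y : V} :
    G.mycielskian.Adj (Sum.inl x) (Sum.inl y) ↔ G.Adj x y := by
  simp only [mycielskian, fromRel_adj, ne_eq, Sum.inl.injEq, G.adj_comm y x, or_self]
  exact ⟨fun h => h.2, fun h => ⟨h.ne, h⟩⟩

/-- Forgets which copy of `V` a vertex of the Mycielskian lies in. The extra vertex `w` gets the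
arbitrary value `x₀`. -/
def mycielskianProj (x₀ : V) : V ⊕ V ⊕ Unit → V
  | Sum.inl x => x
  | Sum.inr (Sum.inl x) => x
  | Sum.inr (Sum.inr _) => x₀

lemma adj_mycielskianProj (x₀ : V) {a b : V ⊕ V ⊕ Unit} (h : G.mycielskian.Adj a b)
    (ha : a ≠ Sum.inr (Sum.inr ())) (hb : b ≠ Sum.inr (Sum.inr ())) :
    G.Adj (mycielskianProj x₀ a) (mycielskianProj x₀ b) := by
  rcases a with x | x | ⟨⟩ <;> rcases b with y | y | ⟨⟩ <;>
    simp_all [mycielskian, mycielskianProj, G.adj_comm]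

/-- The neighbours of `w` form an independent set, so `w` lies in no triangle. -/
lemma IsClique.card_le_two_of_mem_apex {s : Finset (V ⊕ V ⊕ Unit)}
    (hs : G.mycielskian.IsClique (s : Set (V ⊕ V ⊕ Unit)))
    (hw : Sum.inr (Sum.inr ()) ∈ s) : s.card ≤ 2 := by
  classical
  have key : (s.erase (Sum.inr (Sum.inr ()))).card ≤ 1 := by
    rw [Finset.card_le_one]
    intro a ha b hb
    rw [Finset.mem_erase] at ha hb
    by_contra hab
    have h₁ := hs ha.2 hw ha.1
    have h₂ := hs hb.2 hw hb.1
    have h₃ := hs ha.2 hb.2 hab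
    rcases a with x | x | ⟨⟩ <;> rcases b with y | y | ⟨⟩ <;> simp_all [mycielskian]
  rw [Finset.card_erase_of_mem hw] at key
  omega

lemma two_le_cliqueNum [Finite V] {x y : V} (h : G.Adj x y) : 2 ≤ G.cliqueNum := by
  classical
  rw [← Finset.card_pair h.ne]
  apply IsClique.card_le_cliqueNum
  simpa [isClique_pair] using fun _ => h

end SimpleGraph

/-- The Mycielskian preserves the clique number of any finite graph with at least
one edge. -/
theorem mycielskian_cliqueNum {V : Type*} [Fintype V] (G : SimpleGraph V)
    (hE : G.edgeSet.Nonempty) :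
    G.mycielskian.cliqueNum = G.cliqueNum := by
  classical
  obtain ⟨⟨x₀, y₀⟩, he⟩ := hE
  have hadj : G.Adj x₀ y₀ := he
  apply le_antisymm
  · obtain ⟨s, hs, hcard⟩ := G.mycielskian.exists_isNClique_cliqueNum
    rw [← hcard]
    by_cases hw : Sum.inr (Sum.inr ()) ∈ s
    · exact (hs.card_le_two_of_mem_apex hw).trans (two_le_cliqueNum hadj)
    · have hne : ∀ a ∈ s, a ≠ Sum.inr (Sum.inr ()) := fun a ha h => hw (h ▸ ha)
      have hproj : ∀ a ∈ s, ∀ b ∈ s, a ≠ b →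
          G.Adj (mycielskianProj x₀ a) (mycielskianProj x₀ b) := fun a ha b hb hab =>
        adj_mycielskianProj x₀ (hs ha hb hab) (hne a ha) (hne b hb)
      -- Adjacent vertices are distinct, so the projection is injective on the clique.
      have hinj : Set.InjOn (mycielskianProj x₀) (s : Set (V ⊕ V ⊕ Unit)) := by
        intro a ha b hb hab
        by_contra hne'
        exact (hproj a ha b hb hne').ne hab
      rw [← Finset.card_image_of_injOn hinj]
      apply IsClique.card_le_cliqueNum
      intro x hx y hy hxy
      obtain ⟨a, ha, rfl⟩ := Finset.mem_image.mp hx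
      obtain ⟨b, hb, rfl⟩ := Finset.mem_image.mp hy
      exact hproj a ha b hb fun h => hxy (congrArg _ h)
  · obtain ⟨s, hs, hcard⟩ := G.exists_isNClique_cliqueNum
    rw [← hcard, ← Finset.card_image_of_injective s (Sum.inl_injective (β := V ⊕ Unit))]
    apply IsClique.card_le_cliqueNum
    intro a ha b hb hab
    obtain ⟨x, hx, rfl⟩ := Finset.mem_image.mp ha
    obtain ⟨y, hy, rfl⟩ := Finset.mem_image.mp hb
    exact mycielskian_adj_inl_inl.mpr (hs hx hy fun h => hab (congrArg _ h))
end

section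
/- (Soundness of the Mycielskian lower bound.) Let G be a simple graph on a finite vertex set V, let S ⊆ V, and let H be the subgraph of G induced on S. Suppose χ(H) ≥ k and that there is an injective graph homomorphism from the Mycielskian μ(H) into G (i.e., μ(H) occurs as a subgraph of G). Then χ(G) ≥ k + 1. -/
/-!
A proper coloring `c` of the Mycielskian `μ(H)` yields a proper coloring of `H` that avoids the
color of the apex `w`: color `x` by `c u_x`, unless `c u_x = c w`, in which case use the color
`c v_x` of the twin, which differs from `c w` since `v_x` is adjacent to `w`. Two adjacent `x`, `y`
are never both recolored (`c u_x ≠ c u_y`), and `v_x` is adjacent to `u_y`, so this is proper. Hence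
`χ(μ(H)) ≥ χ(H) + 1`, and a coloring of `G` pulls back along any homomorphism `μ(H) →g G`.
-/

open SimpleGraph

/-- Recoloring the vertices `u_x` that share the color of the apex by the color of their twins
`v_x` saves one color. -/
theorem SimpleGraph.colorable_of_mycielskian_colorable {V : Type*} {H : SimpleGraph V} {n : ℕ}
    (h : H.mycielskian.Colorable (n + 1)) : H.Colorable n := by
  classical
  obtain ⟨c⟩ := h
  have huu : ∀ x y, H.Adj x y → c (Sum.inl x) ≠ c (Sum.inl y) := fun x y hxy =>
    c.valid (by simp [SimpleGraph.mycielskian, hxy, hxy.ne])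
  have huv : ∀ x y, H.Adj x y → c (Sum.inl x) ≠ c (Sum.inr (Sum.inl y)) := fun x y hxy =>
    c.valid (by simp [SimpleGraph.mycielskian, hxy])
  have hvw : ∀ x, c (Sum.inr (Sum.inl x)) ≠ c (Sum.inr (Sum.inr ())) := fun x =>
    c.valid (by simp [SimpleGraph.mycielskian])
  let d : H.Coloring {a : Fin (n + 1) // a ≠ c (Sum.inr (Sum.inr ()))} :=
    Coloring.mk
      (fun x =>
        if hx : c (Sum.inl x) = c (Sum.inr (Sum.inr ())) then ⟨c (Sum.inr (Sum.inl x)), hvw x⟩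
        else ⟨c (Sum.inl x), hx⟩)
      (by
        intro x y hxy
        have h1 := huu x y hxy
        have h2 := huv x y hxy
        have h3 := huv y x hxy.symm
        split_ifs <;> simp only [ne_eq, Subtype.mk.injEq] <;> grind)
  simpa using d.colorable

/-- Soundness of the Mycielskian lower bound: if the subgraph `H` of `G` induced on `S`
has chromatic number at least `k` and the Mycielskian of `H` occurs as a subgraph of `G`
(via an injective graph homomorphism), then `χ(G) ≥ k + 1`. -/
theorem mycielskian_lower_bound {V : Type*} [Fintype V] (G : SimpleGraph V)
    (S : Set V) {k : ℕ}
    (hH : (k : ℕ∞) ≤ (G.induce S).chromaticNumber)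
    (f : (G.induce S).mycielskian →g G) (hf : Function.Injective f) :
    ((k : ℕ∞) + 1) ≤ G.chromaticNumber := by
  refine le_iInf₂ fun n hn => ?_
  have hμ : (G.induce S).mycielskian.Colorable n := Colorable.of_hom f hn
  cases n with
  | zero =>
    -- The apex of the Mycielskian exists even for `S = ∅`, so at least one color is needed.
    obtain ⟨c⟩ := hμ
    exact (c (Sum.inr (Sum.inr ()))).elim0
  | succ m =>
    have hm : (G.induce S).chromaticNumber ≤ m :=
      (colorable_of_mycielskian_colorable hμ).chromaticNumber_le
    have := hH.trans hm
    push_cast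
    gcongr
end
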